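/- Let D ∈ {3,5} and let H be a planar graph with maximum degree at most D. Then there exists a D-regular planar graph H* that contains H as a subgraph. -/

import Mathlib

/-!
A vertex of too small a degree is repaired by joining it by a bridge to the root of a gadget: a
planar graph whose vertices have degree `D`, except for the root, which has degree `D - 1`. A bridge
creates no new minor isomorphic to a `2`-connected graph such as `K₅` or `K₃,₃`, because the part of
every branch set on one of its two sides already forms a model. Repeating this until no vertex is
deficient gives the regular graph.

The gadgets are certified to be planar by an abstract dual, a multigraph on the same edges whose cut
space modulo 2 is the cycle space of the gadget. Deletion and contraction of edges pass to the dual,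
so every minor of the gadget has an abstract dual too, and for `K₅` and `K₃,₃` Euler's formula rules
this out.
-/

open SimpleGraph Filter Asymptotics

/-- `H` is a minor of `G`: to each vertex of `H` we can assign a connected nonempty
branch set in `G`, pairwise disjoint, with an edge of `G` between the branch sets of
any two adjacent vertices of `H`. -/
def IsMinor {α β : Type*} (H : SimpleGraph α) (G : SimpleGraph β) : Prop :=
  ∃ f : α → Set β,
    (∀ a, (G.induce (f a)).Connected) ∧
    (∀ a b, a ≠ b → Disjoint (f a) (f b)) ∧
    (∀ a b, H.Adj a b → ∃ u ∈ f a, ∃ v ∈ f b, G.Adj u v)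

/-- A graph is planar iff it has neither a `K₅`-minor nor a `K₃,₃`-minor
(Wagner's theorem). -/
def IsPlanar {V : Type*} (G : SimpleGraph V) : Prop :=
  ¬ IsMinor (completeGraph (Fin 5)) G ∧
    ¬ IsMinor (completeBipartiteGraph (Fin 3) (Fin 3)) G

/-- The number of edges of a graph. -/
noncomputable def edgeCount {V : Type*} (G : SimpleGraph V) : ℕ :=
  G.edgeSet.ncard

/-- The degree of a vertex. -/
noncomputable def vertexDegree {V : Type*} (G : SimpleGraph V) (v : V) : ℕ :=
  (G.neighborSet v).ncard

/-- `𝒫(n,m)`: the set of labelled planar graphs on `{1,…,n}` with exactly `m` edges. -/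
def planarSet (n m : ℕ) : Set (SimpleGraph (Fin n)) :=
  {G | IsPlanar G ∧ edgeCount G = m}

/-- The probability that the uniform random planar graph `P_{n,m}` satisfies `P`. -/
noncomputable def planarProb (n m : ℕ) (P : SimpleGraph (Fin n) → Prop) : ℝ :=
  ({G ∈ planarSet n m | P G}.ncard : ℝ) / ((planarSet n m).ncard : ℝ)

/-- The number of pendant edges (edges incident to a vertex of degree 1). -/
noncomputable def pendantCount {V : Type*} (G : SimpleGraph V) : ℕ :=
  {e ∈ G.edgeSet | ∃ v ∈ e, vertexDegree G v = 1}.ncard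

/-- The set of addable non-edges of `G`: non-edges whose addition keeps the graph planar. -/
def addableSet {V : Type*} (G : SimpleGraph V) : Set (Sym2 V) :=
  {e | ¬ e.IsDiag ∧ e ∉ G.edgeSet ∧ IsPlanar (G ⊔ SimpleGraph.fromEdgeSet {e})}

/-- `add(n,m)`: the minimum number of addable non-edges over all graphs in `𝒫(n,m)`. -/
noncomputable def addMin (n m : ℕ) : ℕ :=
  sInf ((fun G => (addableSet G).ncard) '' planarSet n m)

/-- `W` carries an induced order-preserving copy of `H` in `G`: the increasing bijection
from `{1,…,h}` to `W` is an isomorphism between `H` and the induced subgraph `G[W]`. -/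
def IsOrderCopy {h n : ℕ} (H : SimpleGraph (Fin h)) (G : SimpleGraph (Fin n))
    (W : Finset (Fin n)) : Prop :=
  ∃ hW : W.card = h,
    ∀ i j : Fin h,
      H.Adj i j ↔ G.Adj ((W.orderIsoOfFin hW i : Fin n)) ((W.orderIsoOfFin hW j : Fin n))

/-- `W` is the vertex set of a connected component of `G`. -/
def IsComponent {V : Type*} (G : SimpleGraph V) (W : Finset V) : Prop :=
  (G.induce (W : Set V)).Connected ∧ ∀ v ∈ W, ∀ u, G.Adj v u → u ∈ W

/-- The number of components of `G` admitting an order-preserving isomorphism to `H`. -/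
noncomputable def numOrderComponents {h n : ℕ} (H : SimpleGraph (Fin h))
    (G : SimpleGraph (Fin n)) : ℕ :=
  {W : Finset (Fin n) | IsComponent G W ∧ IsOrderCopy H G W}.ncard

/-- The number of distinct cycles (as subgraphs, identified with their edge sets) of
length at most `k` in `S`. -/
noncomputable def cycleCountLe {V : Type*} (S : SimpleGraph V) (k : ℕ) : ℕ :=
  {E : Set (Sym2 V) | ∃ (v : V) (c : S.Walk v v),
    c.IsCycle ∧ c.length ≤ k ∧ {e | e ∈ c.edges} = E}.ncard

universe u

section CutSpace

open scoped Matrix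

variable {V E F : Type*}

/-- The coboundary map modulo 2 of the multigraph with vertex set `V` and edge set `E` whose edge
`e` has the pair of ends `i e`: a 0-1 colouring of the vertices goes to the set of edges whose ends
have different colours. -/
def cutMap (i : E → Sym2 V) : (V → ZMod 2) →ₗ[ZMod 2] (E → ZMod 2) where
  toFun c e := Sym2.lift ⟨fun a b => c a + c b, fun a b => add_comm (c a) (c b)⟩ (i e)
  map_add' c d := by
    ext e
    induction h : i e with
    | _ a b => simp only [h, Sym2.lift_mk, Pi.add_apply, add_add_add_comm]
  map_smul' r c := by
    ext e
    induction h : i e with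
    | _ a b => simp only [h, Sym2.lift_mk, Pi.smul_apply, smul_add, RingHom.id_apply]

/-- The cut space of the multigraph with edge ends `i`: its edge cuts, as vectors modulo 2. -/
def cutSpace (i : E → Sym2 V) : Submodule (ZMod 2) (E → ZMod 2) :=
  LinearMap.range (cutMap i)

/-- The cycle space of the multigraph with edge ends `i`: the edge sets that meet every cut in an
even number of edges. -/
def cycleSpace [Fintype E] (i : E → Sym2 V) : Submodule (ZMod 2) (E → ZMod 2) :=
  LinearMap.BilinForm.orthogonal (dotProductBilin (ZMod 2) (ZMod 2)) (cutSpace i)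

/-- Abstract (Whitney) duality of the multigraphs with edge ends `i` and `j` on the same edge set:
the cuts of the second are the cycles of the first. For a plane graph, `j e` is the pair of faces
on the two sides of the edge `e`. -/
def IsPlaneDual [Fintype E] (i : E → Sym2 V) (j : E → Sym2 F) : Prop :=
  cutSpace j = cycleSpace i

lemma cutMap_apply_of_eq {i : E → Sym2 V} {e : E} {a b : V} (h : i e = s(a, b)) (c : V → ZMod 2) :
    cutMap i c e = c a + c b := by
  simp [cutMap, h]

lemma cutMap_apply_eq_zero_iff {i : E → Sym2 V} {e : E} {c : V → ZMod 2} :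
    cutMap i c e = 0 ↔ ∀ a ∈ i e, ∀ b ∈ i e, c a = c b := by
  induction h : i e with
  | _ a b =>
    rw [cutMap_apply_of_eq h, CharTwo.add_eq_zero]
    grind

lemma cutMap_mem_cutSpace (i : E → Sym2 V) (c : V → ZMod 2) : cutMap i c ∈ cutSpace i :=
  LinearMap.mem_range_self (cutMap i) c

lemma isRefl_dotProductBilin (R : Type*) [CommRing R] [Fintype E] :
    (dotProductBilin R R : LinearMap.BilinForm R (E → R)).IsRefl :=
  fun y z h => (dotProduct_comm z y).trans h

lemma nondegenerate_dotProductBilin (R : Type*) [CommRing R] [Fintype E] :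
    (dotProductBilin R R : LinearMap.BilinForm R (E → R)).Nondegenerate :=
  (isRefl_dotProductBilin R).nondegenerate_iff_separatingLeft.2 fun _ h => dotProduct_eq_zero _ h

lemma mem_cycleSpace [Fintype E] {i : E → Sym2 V} {z : E → ZMod 2} :
    z ∈ cycleSpace i ↔ ∀ c, cutMap i c ⬝ᵥ z = 0 :=
  Set.forall_mem_range

lemma IsPlaneDual.symm [Fintype E] {i : E → Sym2 V} {j : E → Sym2 F} (h : IsPlaneDual i j) :
    IsPlaneDual j i := by
  rw [IsPlaneDual, cycleSpace, h, cycleSpace, LinearMap.BilinForm.orthogonal_orthogonal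
    (nondegenerate_dotProductBilin (ZMod 2)) (isRefl_dotProductBilin (ZMod 2))]

lemma finrank_cutSpace_add_finrank_cycleSpace [Fintype E] (i : E → Sym2 V) :
    Module.finrank (ZMod 2) (cutSpace i) + Module.finrank (ZMod 2) (cycleSpace i) =
      Fintype.card E := by
  rw [cycleSpace, LinearMap.BilinForm.finrank_orthogonal (nondegenerate_dotProductBilin (ZMod 2)),
    Module.finrank_fintype_fun_eq_card]
  refine Nat.add_sub_cancel' ((Submodule.finrank_le _).trans_eq ?_)
  exact Module.finrank_fintype_fun_eq_card _

end CutSpace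

section Minor

open scoped Matrix

variable {V E F X : Type*}

lemma cutMap_map {W : Type*} (i : E → Sym2 V) (θ : V → W) (c : W → ZMod 2) :
    cutMap (fun e => (i e).map θ) c = cutMap i (c ∘ θ) := by
  ext e
  induction h : i e with
  | _ a b =>
    rw [cutMap_apply_of_eq h, cutMap_apply_of_eq (a := θ a) (b := θ b) (by rw [h, Sym2.map_mk])]
    rfl

lemma cutSpace_map_of_injective {W : Type*} (i : E → Sym2 V) {θ : V → W}
    (hθ : Function.Injective θ) : cutSpace (fun e => (i e).map θ) = cutSpace i := by
  ext z
  constructor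
  · rintro ⟨c, rfl⟩
    exact ⟨c ∘ θ, (cutMap_map i θ c).symm⟩
  · rintro ⟨c, rfl⟩
    obtain ⟨d, rfl⟩ := hθ.surjective_comp_right c
    exact ⟨d, cutMap_map i θ d⟩

lemma IsPlaneDual.of_map {W : Type*} [Fintype E] {i : E → Sym2 V} {j : E → Sym2 F} {θ : V → W}
    (hθ : Function.Injective θ) (h : IsPlaneDual (fun e => (i e).map θ) j) : IsPlaneDual i j := by
  rwa [IsPlaneDual, cycleSpace, cutSpace_map_of_injective i hθ] at h

/-- The multigraph with edge ends `j` after contraction of every edge outside the range of `ρ`;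
its edges are indexed by the domain of `ρ`. -/
def contractCompl (j : E → Sym2 F) (ρ : X → E) (x : X) :
    Sym2 (Quot fun φ ψ => ∃ e ∉ Set.range ρ, j e = s(φ, ψ)) :=
  (j (ρ x)).map (Quot.mk _)

variable {ρ : X → E}

lemma cutMap_contractCompl (j : E → Sym2 F) (hρ : Function.Injective ρ)
    (c : Quot (fun φ ψ => ∃ e ∉ Set.range ρ, j e = s(φ, ψ)) → ZMod 2) :
    cutMap j (c ∘ Quot.mk _) = Function.extend ρ (cutMap (contractCompl j ρ) c) 0 := by
  ext e
  by_cases he : e ∈ Set.range ρ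
  · obtain ⟨x, rfl⟩ := he
    rw [hρ.extend_apply]
    exact (congrFun (cutMap_map (j ∘ ρ) (Quot.mk _) c) x).symm
  · rw [Function.extend_apply' _ _ _ he]
    induction h : j e with
    | _ φ ψ =>
      rw [cutMap_apply_of_eq h, Function.comp_apply, Function.comp_apply,
        Quot.sound (⟨e, he, h⟩ : ∃ e ∉ Set.range ρ, j e = s(φ, ψ))]
      exact CharTwo.add_self_eq_zero _

lemma mem_cutSpace_contractCompl {j : E → Sym2 F} (hρ : Function.Injective ρ) {z : X → ZMod 2} :
    z ∈ cutSpace (contractCompl j ρ) ↔ Function.extend ρ z 0 ∈ cutSpace j := by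
  constructor
  · rintro ⟨c, rfl⟩
    exact ⟨_, cutMap_contractCompl j hρ c⟩
  · rintro ⟨d, hd⟩
    have hd_contracted : ∀ φ ψ, (∃ e ∉ Set.range ρ, j e = s(φ, ψ)) → d φ = d ψ := by
      rintro φ ψ ⟨e, he, hj⟩
      rw [← CharTwo.add_eq_zero, ← cutMap_apply_of_eq hj, hd, Function.extend_apply' _ _ _ he,
        Pi.zero_apply]
    refine ⟨Quot.lift d hd_contracted, Function.extend_injective hρ (0 : E → ZMod 2) ?_⟩
    beta_reduce
    rw [← cutMap_contractCompl j hρ, ← hd]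
    rfl

lemma dotProduct_extend_zero {R : Type*} [NonUnitalNonAssocSemiring R] [Fintype E] [Fintype X]
    (hρ : Function.Injective ρ) (y : E → R) (z : X → R) :
    y ⬝ᵥ Function.extend ρ z 0 = (y ∘ ρ) ⬝ᵥ z := by
  refine (Fintype.sum_of_injective ρ hρ _ _ (fun e he => ?_) fun x => ?_).symm
  · rw [Function.extend_apply' _ _ _ he, Pi.zero_apply, mul_zero]
  · rw [hρ.extend_apply, Function.comp_apply]

lemma mem_cycleSpace_comp [Fintype E] [Fintype X] {i : E → Sym2 V} (hρ : Function.Injective ρ)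
    {z : X → ZMod 2} : z ∈ cycleSpace (i ∘ ρ) ↔ Function.extend ρ z 0 ∈ cycleSpace i := by
  simp only [mem_cycleSpace, dotProduct_extend_zero hρ]
  rfl

lemma IsPlaneDual.delete [Fintype E] [Fintype X] {i : E → Sym2 V} {j : E → Sym2 F}
    (h : IsPlaneDual i j) (hρ : Function.Injective ρ) :
    IsPlaneDual (i ∘ ρ) (contractCompl j ρ) := by
  ext z
  rw [mem_cutSpace_contractCompl hρ, mem_cycleSpace_comp hρ, h]

lemma IsPlaneDual.contract [Fintype E] [Fintype X] {i : E → Sym2 V} {j : E → Sym2 F}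
    (h : IsPlaneDual i j) (hρ : Function.Injective ρ) :
    IsPlaneDual (contractCompl i ρ) (j ∘ ρ) :=
  (h.symm.delete hρ).symm

end Minor

section Model

variable {V E α : Type*}

lemma eq_of_reachable {T : Type*} {G : SimpleGraph V} {c : V → T}
    (hc : ∀ v w, G.Adj v w → c v = c w) {v w : V} (h : G.Reachable v w) : c v = c w := by
  obtain ⟨p⟩ := h
  induction p with
  | nil => rfl
  | cons hvx _ ih => exact (hc _ _ hvx).trans ih

/-- The sets `f a` are the branch sets of a model of `K` as a minor of `G`, so that `IsMinor K G`
says that such an `f` exists. -/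
structure IsMinorModel (K : SimpleGraph α) (G : SimpleGraph V) (f : α → Set V) : Prop where
  connected : ∀ a, (G.induce (f a)).Connected
  disjoint : ∀ a b, a ≠ b → Disjoint (f a) (f b)
  exists_adj : ∀ a b, K.Adj a b → ∃ v ∈ f a, ∃ w ∈ f b, G.Adj v w

lemma isMinor_iff_exists_isMinorModel {K : SimpleGraph α} {G : SimpleGraph V} :
    IsMinor K G ↔ ∃ f, IsMinorModel K G f :=
  ⟨fun ⟨f, h₁, h₂, h₃⟩ => ⟨f, h₁, h₂, h₃⟩, fun ⟨f, h₁, h₂, h₃⟩ => ⟨f, h₁, h₂, h₃⟩⟩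

variable {K : SimpleGraph α} {G : SimpleGraph V} {f : α → Set V}

lemma IsMinorModel.eq_of_mem (hf : IsMinorModel K G f) {a b : α} {v : V} (ha : v ∈ f a)
    (hb : v ∈ f b) : a = b :=
  by_contra fun hab => Set.disjoint_left.1 (hf.disjoint a b hab) ha hb

lemma IsMinorModel.nonempty (hf : IsMinorModel K G f) (a : α) : (f a).Nonempty :=
  Set.nonempty_coe_sort.1 (hf.connected a).nonempty

/-- The edges of the multigraph with edge ends `i` that lie inside one of the sets `f a`. -/
def innerEdges (i : E → Sym2 V) (f : α → Set V) : Set E :=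
  {e | ∃ a, ∀ v ∈ i e, v ∈ f a}

/-- The edges that remain when the branch sets `f a` are contracted. -/
abbrev outerEdge (i : E → Sym2 V) (f : α → Set V) : ↥(innerEdges i f)ᶜ → E :=
  Subtype.val

lemma notMem_range_outerEdge {i : E → Sym2 V} {e : E} :
    e ∉ Set.range (outerEdge i f) ↔ e ∈ innerEdges i f := by
  rw [Subtype.range_coe, Set.notMem_compl_iff]

lemma mem_innerEdges_of_eq {i : E → Sym2 V} {e : E} {v w : V} (he : i e = s(v, w)) :
    e ∈ innerEdges i f ↔ ∃ a, v ∈ f a ∧ w ∈ f a := by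
  simp [innerEdges, he]

variable {i : E → Sym2 V}

lemma IsMinorModel.quot_mk_eq (hf : IsMinorModel K G f) (hG : G.edgeSet ⊆ Set.range i) {a : α}
    {v w : V} (hv : v ∈ f a) (hw : w ∈ f a) :
    Quot.mk (fun v w => ∃ e ∉ Set.range (outerEdge i f), i e = s(v, w)) v = Quot.mk _ w := by
  refine eq_of_reachable (G := G.induce (f a)) (c := fun x => Quot.mk _ x.1) ?_
    ((hf.connected a).preconnected ⟨v, hv⟩ ⟨w, hw⟩)
  intro x y hxy
  obtain ⟨e, he⟩ := hG (G.mem_edgeSet.2 hxy)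
  exact Quot.sound ⟨e, notMem_range_outerEdge.2 ((mem_innerEdges_of_eq he).2 ⟨a, x.2, y.2⟩), he⟩

lemma IsMinorModel.eq_of_quot_mk_eq (hf : IsMinorModel K G f) {a b : α} {v w : V}
    (hv : v ∈ f a) (hw : w ∈ f b)
    (h : Quot.mk (fun v w => ∃ e ∉ Set.range (outerEdge i f), i e = s(v, w)) v = Quot.mk _ w) :
    a = b := by
  have mem_invariant : ∀ v w, (∃ e ∉ Set.range (outerEdge i f), i e = s(v, w)) →
      (v ∈ f a) = (w ∈ f a) := by
    rintro v w ⟨e, he, hvw⟩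
    obtain ⟨b, hvb, hwb⟩ := (mem_innerEdges_of_eq hvw).1 (notMem_range_outerEdge.1 he)
    exact propext ⟨fun hva => hf.eq_of_mem hva hvb ▸ hwb, fun hwa => hf.eq_of_mem hwa hwb ▸ hvb⟩
  have hwa : w ∈ f a := (congrArg (Quot.lift (· ∈ f a) mem_invariant) h).mp hv
  exact hf.eq_of_mem hwa hw

lemma IsMinorModel.exists_contractCompl_eq_map (hf : IsMinorModel K G f)
    (hG : G.edgeSet ⊆ Set.range i) :
    ∃ θ : α → Quot fun v w => ∃ e ∉ Set.range (outerEdge i f), i e = s(v, w),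
      Function.Injective θ ∧
        ∀ x : K.edgeSet, ∃ e, contractCompl i (outerEdge i f) e = x.1.map θ := by
  choose rep hrep using hf.nonempty
  refine ⟨fun a => Quot.mk _ (rep a),
    fun a b h => hf.eq_of_quot_mk_eq (hrep a) (hrep b) h, ?_⟩
  rintro ⟨x, hx⟩
  induction x with
  | _ a b =>
    obtain ⟨v, hv, w, hw, hvw⟩ := hf.exists_adj a b hx
    obtain ⟨e, he⟩ := hG (G.mem_edgeSet.2 hvw)
    have he_outer : e ∉ innerEdges i f := by
      rw [mem_innerEdges_of_eq he]
      rintro ⟨c, hvc, hwc⟩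
      exact K.ne_of_adj hx ((hf.eq_of_mem hv hvc).trans (hf.eq_of_mem hwc hw))
    refine ⟨⟨e, he_outer⟩, ?_⟩
    rw [contractCompl, he, Sym2.map_mk, Sym2.map_mk, hf.quot_mk_eq hG hv (hrep a),
      hf.quot_mk_eq hG hw (hrep b)]

lemma IsPlaneDual.exists_of_isMinor {F : Type u} [Fintype E] [Finite F] [Fintype K.edgeSet]
    {j : E → Sym2 F} (h : IsPlaneDual i j) (hG : G.edgeSet ⊆ Set.range i) (hKG : IsMinor K G) :
    ∃ (F' : Type u) (_ : Finite F') (j' : K.edgeSet → Sym2 F'),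
      IsPlaneDual (Subtype.val : K.edgeSet → Sym2 α) j' := by
  classical
  obtain ⟨f, hf⟩ := isMinor_iff_exists_isMinorModel.1 hKG
  obtain ⟨θ, hθ, hexists⟩ := hf.exists_contractCompl_eq_map hG
  choose ρ hρ using hexists
  have hρ_inj : Function.Injective ρ := fun x y hxy =>
    Subtype.val_injective (Sym2.map.injective hθ (by rw [← hρ x, ← hρ y, hxy]))
  have hdual := (h.contract Subtype.val_injective).delete hρ_inj
  rw [show contractCompl i (outerEdge i f) ∘ ρ = fun x => x.1.map θ from funext hρ] at hdual
  exact ⟨_, inferInstance, _, hdual.of_map hθ⟩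

end Model

section Star

open scoped Matrix

variable {V E F : Type*}

/-- The cut that separates the vertex `v` from all other vertices. Loops at `v` do not belong to
it. For a dual multigraph it is the boundary of the face `v`. -/
def starCut [DecidableEq V] (i : E → Sym2 V) (v : V) : E → ZMod 2 :=
  cutMap i (Pi.single v 1)

lemma cutMap_eq_sum_starCut [Fintype V] [DecidableEq V] (i : E → Sym2 V) (c : V → ZMod 2) :
    cutMap i c = ∑ v, c v • starCut i v := by
  conv_lhs => rw [pi_eq_sum_univ' c]
  simp only [map_sum, map_smul, starCut]

lemma mem_of_starCut_ne_zero [DecidableEq V] {i : E → Sym2 V} {v : V} {e : E}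
    (h : starCut i v e ≠ 0) : v ∈ i e := by
  contrapose! h
  refine cutMap_apply_eq_zero_iff.2 fun a ha b hb => ?_
  rw [Pi.single_eq_of_ne (ne_of_mem_of_not_mem ha h),
    Pi.single_eq_of_ne (ne_of_mem_of_not_mem hb h)]

lemma mem_cycleSpace_iff_starCut [Finite V] [DecidableEq V] [Fintype E] {i : E → Sym2 V}
    {z : E → ZMod 2} : z ∈ cycleSpace i ↔ ∀ v, starCut i v ⬝ᵥ z = 0 := by
  have := Fintype.ofFinite V
  rw [mem_cycleSpace]
  refine ⟨fun h v => h _, fun h c => ?_⟩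
  simp only [cutMap_eq_sum_starCut, sum_dotProduct, smul_dotProduct, h, smul_zero,
    Finset.sum_const_zero]

lemma cutSpace_eq_bot [Finite V] [DecidableEq V] {i : E → Sym2 V} (h : ∀ v, starCut i v = 0) :
    cutSpace i = ⊥ := by
  have := Fintype.ofFinite V
  refine LinearMap.range_eq_bot.2 (LinearMap.ext fun c => ?_)
  simp only [cutMap_eq_sum_starCut, h, smul_zero, Finset.sum_const_zero, LinearMap.zero_apply]

-- Adding a constant to a colouring does not change its cut, so `v₀` may be given the colour `0`.
lemma cutSpace_le_span_starCut [Finite V] [DecidableEq V] {i : E → Sym2 V} {S : Finset V}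
    (hstar : ∀ v ∉ S, starCut i v = 0) (v₀ : V) :
    cutSpace i ≤ Submodule.span (ZMod 2) (starCut i '' ↑(S.erase v₀)) := by
  have := Fintype.ofFinite V
  rintro _ ⟨c, rfl⟩
  have shift : cutMap i c = cutMap i (fun v => c v - c v₀) := by
    rw [← sub_eq_zero, ← map_sub]
    ext e
    refine cutMap_apply_eq_zero_iff.2 fun a _ b _ => ?_
    simp only [Pi.sub_apply, sub_sub_cancel]
  rw [shift, cutMap_eq_sum_starCut]
  refine Submodule.sum_mem _ fun v _ => ?_
  by_cases hv : v ∈ S.erase v₀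
  · exact Submodule.smul_mem _ _ (Submodule.subset_span (Set.mem_image_of_mem _ hv))
  by_cases hvS : v ∈ S
  · obtain rfl : v = v₀ := by_contra fun hne => hv (Finset.mem_erase.2 ⟨hne, hvS⟩)
    rw [sub_self, zero_smul]
    exact Submodule.zero_mem _
  · rw [hstar v hvS, smul_zero]
    exact Submodule.zero_mem _

lemma finrank_cutSpace_lt_card [Finite V] [DecidableEq V] {i : E → Sym2 V} {S : Finset V}
    (hS : S.Nonempty) (hstar : ∀ v ∉ S, starCut i v = 0) :
    Module.finrank (ZMod 2) (cutSpace i) < S.card := by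
  classical
  obtain ⟨v₀, hv₀⟩ := hS
  have cutSpace_le := cutSpace_le_span_starCut hstar v₀
  rw [← Finset.coe_image] at cutSpace_le
  calc Module.finrank (ZMod 2) (cutSpace i)
      ≤ Module.finrank (ZMod 2)
          (Submodule.span (ZMod 2) (↑((S.erase v₀).image (starCut i)) : Set (E → ZMod 2))) :=
        Submodule.finrank_mono cutSpace_le
    _ ≤ ((S.erase v₀).image (starCut i)).card := finrank_span_finset_le_card _
    _ ≤ (S.erase v₀).card := Finset.card_image_le
    _ < S.card := Finset.card_erase_lt_of_mem hv₀

lemma card_le_finrank_cutSpace_add_one [Fintype V] {i : E → Sym2 V}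
    (h : (fromEdgeSet (Set.range i)).Preconnected) :
    Fintype.card V ≤ Module.finrank (ZMod 2) (cutSpace i) + 1 := by
  have ker_le : LinearMap.ker (cutMap i) ≤ Submodule.span (ZMod 2) {1} := by
    intro c hc
    have c_const : ∀ v w, c v = c w := by
      refine fun v w => eq_of_reachable (fun a b hab => ?_) (h v w)
      obtain ⟨⟨e, he⟩, -⟩ := (fromEdgeSet_adj _).1 hab
      rw [← CharTwo.add_eq_zero, ← cutMap_apply_of_eq he, LinearMap.mem_ker.1 hc, Pi.zero_apply]
    rw [Submodule.mem_span_singleton]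
    rcases isEmpty_or_nonempty V with hV | ⟨⟨v₀⟩⟩
    · exact ⟨0, Subsingleton.elim _ _⟩
    · exact ⟨c v₀, funext fun v => by simp [c_const v v₀]⟩
  rw [← Module.finrank_fintype_fun_eq_card (ZMod 2), ← (cutMap i).finrank_range_add_finrank_ker]
  refine Nat.add_le_add_left ((Submodule.finrank_mono ker_le).trans ?_) _
  exact (finrank_span_le_card {1}).trans_eq (by rw [Set.toFinset_singleton, Finset.card_singleton])

lemma IsPlaneDual.of_euler [Fintype V] [DecidableEq V] [Fintype F] [DecidableEq F] [Fintype E]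
    {i : E → Sym2 V} {j : E → Sym2 F} (horth : ∀ v φ, starCut i v ⬝ᵥ starCut j φ = 0)
    (hi : (fromEdgeSet (Set.range i)).Preconnected)
    (hj : (fromEdgeSet (Set.range j)).Preconnected)
    (heuler : Fintype.card V + Fintype.card F = Fintype.card E + 2) : IsPlaneDual i j := by
  have cutSpace_le : cutSpace j ≤ cycleSpace i := by
    rintro _ ⟨c, rfl⟩
    rw [mem_cycleSpace_iff_starCut]
    intro v
    simp only [cutMap_eq_sum_starCut, dotProduct_sum, dotProduct_smul, horth, smul_zero,
      Finset.sum_const_zero]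
  refine Submodule.eq_of_le_of_finrank_le cutSpace_le ?_
  have rank_i := card_le_finrank_cutSpace_add_one hi
  have rank_j := card_le_finrank_cutSpace_add_one hj
  have rank_add := finrank_cutSpace_add_finrank_cycleSpace i
  lia

lemma card_filter_starCut_ne_zero_le_two [DecidableEq V] (i : E → Sym2 V) (S : Finset V) (e : E) :
    (S.filter fun v => starCut i v e ≠ 0).card ≤ 2 :=
  calc (S.filter fun v => starCut i v e ≠ 0).card
      ≤ (i e).toFinset.card := Finset.card_le_card fun _ hv =>
        Sym2.mem_toFinset.2 (mem_of_starCut_ne_zero (Finset.mem_filter.1 hv).2)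
    _ ≤ 2 := by
        rw [Sym2.card_toFinset]
        split_ifs <;> simp

-- Every face boundary is a cycle, and every edge bounds at most two faces. This is Euler's formula
-- `|E| + 2 ≤ |V| + |F|` multiplied by the girth `g`, with the term `|F| * g` bounded by `2 * |E|`.
lemma IsPlaneDual.card_add_two_mul_le [Fintype V] [Nonempty V] [Finite F] [Fintype E]
    {i : E → Sym2 V} {j : E → Sym2 F} (h : IsPlaneDual i j)
    (hcard : Fintype.card V ≤ Fintype.card E) {g : ℕ}
    (hg : ∀ z ∈ cycleSpace i, z ≠ 0 → g ≤ (Finset.univ.filter (z · ≠ 0)).card) :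
    (Fintype.card E + 2) * g ≤ Fintype.card E * 2 + Fintype.card V * g := by
  classical
  have := Fintype.ofFinite F
  let faces : Finset F := {φ | starCut j φ ≠ 0}
  have notMem_faces : ∀ φ ∉ faces, starCut j φ = 0 := fun φ hφ => by simpa [faces] using hφ
  have rank_add := finrank_cutSpace_add_finrank_cycleSpace i
  rw [← h] at rank_add
  have rank_i : Module.finrank (ZMod 2) (cutSpace i) < Fintype.card V :=
    finrank_cutSpace_lt_card Finset.univ_nonempty fun v hv => absurd (Finset.mem_univ v) hv
  have faces_nonempty : faces.Nonempty := by
    by_contra hempty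
    rw [Finset.not_nonempty_iff_eq_empty] at hempty
    rw [cutSpace_eq_bot fun φ => notMem_faces φ (by simp [hempty]), finrank_bot] at rank_add
    lia
  have rank_j := finrank_cutSpace_lt_card faces_nonempty notMem_faces
  have double_count : faces.card * g ≤ Fintype.card E * 2 :=
    Finset.card_mul_le_card_mul (fun φ e => starCut j φ e ≠ 0)
      (fun φ hφ => hg _ (h ▸ cutMap_mem_cutSpace j _) (Finset.mem_filter.1 hφ).2)
      fun e _ => card_filter_starCut_ne_zero_le_two j faces e
  calc (Fintype.card E + 2) * g
      ≤ (faces.card + Fintype.card V) * g := Nat.mul_le_mul_right g (by lia)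
    _ = faces.card * g + Fintype.card V * g := add_mul ..
    _ ≤ Fintype.card E * 2 + Fintype.card V * g := by gcongr

end Star

section Kuratowski

open scoped Matrix

variable {V E α : Type*} {F : Type u}

lemma exists_ne_of_mem_cycleSpace [Fintype E] {i : E → Sym2 V} {z : E → ZMod 2}
    (hz : z ∈ cycleSpace i) {e : E} (he : z e ≠ 0) {v w : V} (hvw : i e = s(v, w)) (hne : v ≠ w) :
    ∃ e' ≠ e, v ∈ i e' ∧ z e' ≠ 0 := by
  classical
  by_contra! hall
  have only_e : ∀ e' ≠ e, starCut i v e' * z e' = 0 := fun e' he' => by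
    rw [mul_eq_zero, or_iff_not_imp_left]
    exact fun hv => hall e' he' (mem_of_starCut_ne_zero hv)
  have orth : starCut i v ⬝ᵥ z = 0 := mem_cycleSpace.1 hz _
  rw [dotProduct, Fintype.sum_eq_single e only_e, starCut, cutMap_apply_of_eq hvw,
    Pi.single_eq_same, Pi.single_eq_of_ne hne.symm, add_zero, one_mul] at orth
  exact he orth

lemma three_le_card_support_of_mem_cycleSpace {K : SimpleGraph α} [Fintype K.edgeSet]
    {z : K.edgeSet → ZMod 2} (hz : z ∈ cycleSpace Subtype.val) (hz0 : z ≠ 0) :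
    3 ≤ (Finset.univ.filter (z · ≠ 0)).card := by
  obtain ⟨⟨x, hx⟩, hzx⟩ := Function.ne_iff.1 hz0
  induction x with
  | _ a b =>
    have hab : a ≠ b := K.ne_of_adj hx
    obtain ⟨y, hyx, hay, hzy⟩ := exists_ne_of_mem_cycleSpace hz hzx rfl hab
    obtain ⟨y', hyx', hby, hzy'⟩ := exists_ne_of_mem_cycleSpace hz hzx Sym2.eq_swap hab.symm
    have hyy' : y ≠ y' := by
      rintro rfl
      exact hyx (Subtype.ext ((Sym2.mem_and_mem_iff hab).1 ⟨hay, hby⟩))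
    exact Finset.two_lt_card.2 ⟨_, Finset.mem_filter.2 ⟨Finset.mem_univ _, hzx⟩,
      y, Finset.mem_filter.2 ⟨Finset.mem_univ _, hzy⟩,
      y', Finset.mem_filter.2 ⟨Finset.mem_univ _, hzy'⟩, hyx.symm, hyx'.symm, hyy'⟩

lemma even_card_support_of_mem_cycleSpace {K : SimpleGraph α} [Fintype K.edgeSet]
    (C : K.Coloring Bool) {z : K.edgeSet → ZMod 2} (hz : z ∈ cycleSpace Subtype.val) :
    Even (Finset.univ.filter (z · ≠ 0)).card := by
  have cut_eq_one : cutMap (Subtype.val : K.edgeSet → Sym2 α) (fun a => bif C a then 1 else 0) =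
      1 := by
    ext ⟨x, hx⟩
    induction x with
    | _ a b =>
      rw [cutMap_apply_of_eq (i := Subtype.val) (a := a) (b := b) rfl, Pi.one_apply]
      have hC := C.valid hx
      cases ha : C a <;> cases hb : C b <;> simp_all
  have eq_ite : ∀ a : ZMod 2, a = if a ≠ 0 then 1 else 0 := by decide
  have orth := mem_cycleSpace.1 hz fun a => bif C a then 1 else 0
  rw [cut_eq_one, one_dotProduct] at orth
  rw [← ZMod.natCast_eq_zero_iff_even, ← Finset.sum_boole,
    ← Finset.sum_congr rfl fun x _ => eq_ite (z x), orth]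

lemma IsPlaneDual.not_isMinor_completeGraph [Fintype E] [Finite F] {i : E → Sym2 V}
    {j : E → Sym2 F} (h : IsPlaneDual i j) {G : SimpleGraph V} (hG : G.edgeSet ⊆ Set.range i) :
    ¬ IsMinor (completeGraph (Fin 5)) G := by
  classical
  intro hK
  obtain ⟨F', _, j', h'⟩ := h.exists_of_isMinor hG hK
  have card_edges : Fintype.card (completeGraph (Fin 5)).edgeSet = 10 := by
    rw [← edgeFinset_card, card_edgeFinset_top_eq_card_choose_two, Fintype.card_fin]
    rfl
  have euler := h'.card_add_two_mul_le (by rw [card_edges, Fintype.card_fin]; lia)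
    fun z hz hz0 => three_le_card_support_of_mem_cycleSpace hz hz0
  rw [card_edges, Fintype.card_fin] at euler
  lia

lemma IsPlaneDual.not_isMinor_completeBipartiteGraph [Fintype E] [Finite F] {i : E → Sym2 V}
    {j : E → Sym2 F} (h : IsPlaneDual i j) {G : SimpleGraph V} (hG : G.edgeSet ⊆ Set.range i) :
    ¬ IsMinor (completeBipartiteGraph (Fin 3) (Fin 3)) G := by
  classical
  intro hK
  obtain ⟨F', _, j', h'⟩ := h.exists_of_isMinor hG hK
  have card_edges : Fintype.card (completeBipartiteGraph (Fin 3) (Fin 3)).edgeSet = 9 := by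
    rw [← Set.toFinset_card, ← Set.ncard_eq_toFinset_card', Set.ncard,
      encard_edgeSet_completeBipartiteGraph]
    simp
  have girth : ∀ z ∈ cycleSpace (Subtype.val :
      (completeBipartiteGraph (Fin 3) (Fin 3)).edgeSet → _), z ≠ 0 →
      4 ≤ (Finset.univ.filter (z · ≠ 0)).card := by
    intro z hz hz0
    have three_le := three_le_card_support_of_mem_cycleSpace hz hz0
    have even := even_card_support_of_mem_cycleSpace (CompleteBipartiteGraph.bicoloring _ _) hz
    grind
  have euler := h'.card_add_two_mul_le (by simp [card_edges]) girth
  rw [card_edges, Fintype.card_sum, Fintype.card_fin] at euler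
  lia

lemma IsPlaneDual.isPlanar [Fintype E] [Finite F] {i : E → Sym2 V}
    {j : E → Sym2 F} (h : IsPlaneDual i j) {G : SimpleGraph V} (hG : G.edgeSet ⊆ Set.range i) :
    IsPlanar G :=
  ⟨h.not_isMinor_completeGraph hG, h.not_isMinor_completeBipartiteGraph hG⟩

end Kuratowski

section Gadget

variable {V : Type*}

lemma preconnected_of_exists_adj_lt [LT V] [WellFoundedLT V] {G : SimpleGraph V} (r : V)
    (h : ∀ v, v ≠ r → ∃ w, w < v ∧ G.Adj v w) : G.Preconnected := by
  have reachable_root : ∀ v, G.Reachable v r := fun v => by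
    induction v using WellFoundedLT.induction with
    | _ v ih =>
      by_cases hv : v = r
      · rw [hv]
      · obtain ⟨w, hwv, hadj⟩ := h v hv
        exact hadj.reachable.trans (ih w hwv)
  exact fun v w => (reachable_root v).trans (reachable_root w).symm

lemma vertexDegree_eq_degree (G : SimpleGraph V) (v : V) [Fintype (G.neighborSet v)] :
    vertexDegree G v = G.degree v := by
  rw [vertexDegree, Set.ncard_eq_toFinset_card', Set.toFinset_card, card_neighborSet_eq_degree]

/-- A planar graph all of whose vertices have degree `D`, except that the root `w` has degree
`D - 1`. Joining its root to a vertex of another graph raises the degree of that vertex by one. -/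
structure IsGadget (D : ℕ) (Q : SimpleGraph V) (w : V) : Prop where
  isPlanar : IsPlanar Q
  vertexDegree_root : vertexDegree Q w + 1 = D
  vertexDegree_of_ne : ∀ v, v ≠ w → vertexDegree Q v = D

/-- The edges of `K₄` with one edge subdivided by the vertex `0`. -/
def cubicGadgetEnds : Fin 7 → Sym2 (Fin 5) :=
  ![s(0, 1), s(0, 2), s(1, 3), s(1, 4), s(2, 3), s(2, 4), s(3, 4)]

/-- The faces on the two sides of each edge of a plane drawing of the cubic gadget. -/
def cubicGadgetSides : Fin 7 → Sym2 (Fin 4) :=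
  ![s(0, 1), s(0, 1), s(0, 2), s(1, 2), s(0, 3), s(1, 3), s(2, 3)]

/-- The edges of a plane graph with 22 triangular and two quadrilateral faces, whose vertices have
degree 5 except for the vertex `0`, which has degree 4. -/
def quinticGadgetEnds : Fin 37 → Sym2 (Fin 15) :=
  ![s(0, 1), s(0, 2), s(0, 3), s(0, 4), s(1, 2), s(1, 4), s(1, 5), s(1, 6), s(2, 3), s(2, 6),
    s(2, 7), s(3, 4), s(3, 8), s(3, 9), s(4, 8), s(4, 10), s(5, 6), s(5, 10), s(5, 11), s(5, 12),
    s(6, 7), s(6, 11), s(7, 9), s(7, 11), s(7, 13), s(8, 9), s(8, 10), s(8, 14), s(9, 13),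
    s(9, 14), s(10, 12), s(10, 14), s(11, 12), s(11, 13), s(12, 13), s(12, 14), s(13, 14)]

/-- The faces on the two sides of each edge of a plane drawing of the quintic gadget. -/
def quinticGadgetSides : Fin 37 → Sym2 (Fin 24) :=
  ![s(0, 1), s(0, 2), s(2, 4), s(1, 4), s(0, 3), s(1, 5), s(5, 7), s(3, 7), s(2, 6), s(3, 8),
    s(6, 8), s(4, 9), s(9, 12), s(6, 12), s(9, 10), s(5, 10), s(7, 14), s(5, 11), s(14, 17),
    s(11, 17), s(8, 15), s(14, 15), s(6, 13), s(15, 20), s(13, 20), s(12, 19), s(10, 16),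
    s(16, 19), s(13, 21), s(19, 21), s(11, 18), s(16, 18), s(17, 22), s(20, 22), s(22, 23),
    s(18, 23), s(21, 23)]

lemma isPlaneDual_cubicGadget : IsPlaneDual cubicGadgetEnds cubicGadgetSides := by
  refine .of_euler ?_ (preconnected_of_exists_adj_lt 0 ?_) (preconnected_of_exists_adj_lt 0 ?_) rfl
  all_goals decide +kernel

lemma isPlaneDual_quinticGadget : IsPlaneDual quinticGadgetEnds quinticGadgetSides := by
  refine .of_euler ?_ (preconnected_of_exists_adj_lt 0 ?_) (preconnected_of_exists_adj_lt 0 ?_) rfl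
  all_goals decide +kernel

lemma IsPlaneDual.isPlanar_fromEdgeSet_range {E F : Type*} [Fintype E] [Finite F] {i : E → Sym2 V}
    {j : E → Sym2 F} (h : IsPlaneDual i j) : IsPlanar (fromEdgeSet (Set.range i)) :=
  h.isPlanar ((edgeSet_fromEdgeSet _).trans_subset Set.sdiff_subset)

lemma isGadget_cubic : IsGadget 3 (fromEdgeSet (Set.range cubicGadgetEnds)) 0 where
  isPlanar := isPlaneDual_cubicGadget.isPlanar_fromEdgeSet_range
  vertexDegree_root := by
    rw [vertexDegree_eq_degree]
    decide +kernel
  vertexDegree_of_ne := by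
    simp only [vertexDegree_eq_degree]
    decide +kernel

lemma isGadget_quintic : IsGadget 5 (fromEdgeSet (Set.range quinticGadgetEnds)) 0 where
  isPlanar := isPlaneDual_quinticGadget.isPlanar_fromEdgeSet_range
  vertexDegree_root := by
    rw [vertexDegree_eq_degree]
    decide +kernel
  vertexDegree_of_ne := by
    simp only [vertexDegree_eq_degree]
    decide +kernel

end Gadget

section Bridge

variable {V W T α : Type*} {K : SimpleGraph α} {J : SimpleGraph T} {L : Set T} {u w : T}
  {f : α → Set T}

lemma IsMinorModel.comap {G : SimpleGraph V} (hf : IsMinorModel K J f) (φ : G ↪g J)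
    (hφ : ∀ a, f a ⊆ Set.range φ) : IsMinorModel K G fun a => φ ⁻¹' f a where
  connected a := by
    have range_eq : Set.range (φ.comp (Embedding.induce (φ ⁻¹' f a))) = f a := by
      rw [Embedding.coe_comp, Set.range_comp, show ⇑(Embedding.induce _) = Subtype.val from rfl,
        Subtype.range_coe, Set.image_preimage_eq_of_subset (hφ a)]
    rw [(φ.comp (Embedding.induce (φ ⁻¹' f a))).isoInduceRange.connected_iff, range_eq]
    exact hf.connected a
  disjoint a b hab := (hf.disjoint a b hab).preimage φ
  exists_adj a b hab := by
    obtain ⟨x, hx, y, hy, hxy⟩ := hf.exists_adj a b hab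
    obtain ⟨v, rfl⟩ := hφ a hx
    obtain ⟨v', rfl⟩ := hφ b hy
    exact ⟨v, hx, v', hy, φ.map_adj_iff.1 hxy⟩

lemma preconnected_of_surjective {G : SimpleGraph V} {H : SimpleGraph W} (hG : G.Preconnected)
    {r : V → W} (hr : Function.Surjective r)
    (hadj : ∀ a b, G.Adj a b → H.Reachable (r a) (r b)) : H.Preconnected := by
  intro x y
  obtain ⟨a, rfl⟩ := hr x
  obtain ⟨b, rfl⟩ := hr y
  exact ConnectedComponent.exact (eq_of_reachable (c := fun v => H.connectedComponentMk (r v))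
    (fun v w hvw => ConnectedComponent.sound (hadj v w hvw)) (hG a b))

/-- The edge between `u` and `w` is the only one that may leave the vertex set `L`. -/
structure IsBridgeCut (J : SimpleGraph T) (L : Set T) (u w : T) : Prop where
  left_mem : u ∈ L
  right_notMem : w ∉ L
  eq_of_adj : ∀ x y, J.Adj x y → x ∈ L → y ∉ L → x = u ∧ y = w

namespace IsBridgeCut

lemma compl (h : IsBridgeCut J L u w) : IsBridgeCut J Lᶜ w u where
  left_mem := h.right_notMem
  right_notMem := Set.notMem_compl_iff.2 h.left_mem
  eq_of_adj x y hxy hx hy := (h.eq_of_adj y x hxy.symm (Set.notMem_compl_iff.1 hy) hx).symm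

lemma mem_of_preconnected (h : IsBridgeCut J L u w) {A : Set T} (hA : (J.induce A).Preconnected)
    {x y : T} (hxA : x ∈ A) (hxL : x ∈ L) (hyA : y ∈ A) (hyL : y ∉ L) : u ∈ A ∧ w ∈ A := by
  obtain ⟨p⟩ := hA ⟨x, hxA⟩ ⟨y, hyA⟩
  obtain ⟨d, -, hfst, hsnd⟩ := p.exists_boundary_dart (Subtype.val ⁻¹' L) hxL hyL
  obtain ⟨hu, hw⟩ := h.eq_of_adj _ _ d.adj hfst hsnd
  exact ⟨hu ▸ d.fst.2, hw ▸ d.snd.2⟩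

-- The part of `A` outside `L` retracts to `u`, since edges leave `L` only there.
lemma connected_inter (h : IsBridgeCut J L u w) {A : Set T} (hA : (J.induce A).Connected)
    (hAL : (A ∩ L).Nonempty) : (J.induce (A ∩ L)).Connected := by
  classical
  obtain ⟨x, hxA, hxL⟩ := hAL
  by_cases hsub : A ⊆ L
  · rwa [Set.inter_eq_left.2 hsub]
  obtain ⟨y, hyA, hyL⟩ := Set.not_subset.1 hsub
  have huA := (h.mem_of_preconnected hA.preconnected hxA hxL hyA hyL).1
  let r : A → ↥(A ∩ L) := fun z => if hz : z.1 ∈ L then ⟨z, z.2, hz⟩ else ⟨u, huA, h.left_mem⟩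
  have r_of_mem : ∀ z (hz : z.1 ∈ L), r z = ⟨z, z.2, hz⟩ := fun z hz => dif_pos hz
  have r_of_notMem : ∀ z, z.1 ∉ L → r z = ⟨u, huA, h.left_mem⟩ := fun z hz => dif_neg hz
  have r_eq_of_leaves : ∀ a b, J.Adj a.1 b.1 → a.1 ∈ L → b.1 ∉ L → r a = r b := by
    intro a b hab ha hb
    rw [r_of_mem a ha, r_of_notMem b hb]
    exact Subtype.ext (h.eq_of_adj _ _ hab ha hb).1
  have : Nonempty ↥(A ∩ L) := ⟨⟨x, hxA, hxL⟩⟩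
  refine ⟨preconnected_of_surjective hA.preconnected (r := r)
    (fun z => ⟨⟨z, z.2.1⟩, r_of_mem _ z.2.2⟩) fun a b hab => ?_⟩
  by_cases ha : a.1 ∈ L <;> by_cases hb : b.1 ∈ L
  · rw [r_of_mem a ha, r_of_mem b hb]
    exact Adj.reachable hab
  · rw [r_eq_of_leaves a b hab ha hb]
  · rw [r_eq_of_leaves b a hab.symm hb ha]
  · rw [r_of_notMem a ha, r_of_notMem b hb]

lemma isMinorModel_inter (h : IsBridgeCut J L u w) (hf : IsMinorModel K J f)
    (hL : ∀ a, (f a ∩ L).Nonempty) : IsMinorModel K J fun a => f a ∩ L where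
  connected a := h.connected_inter (hf.connected a) (hL a)
  disjoint a b hab := (hf.disjoint a b hab).mono Set.inter_subset_left Set.inter_subset_left
  exists_adj a b hab := by
    obtain ⟨x, hx, y, hy, hxy⟩ := hf.exists_adj a b hab
    have left_mem_of_notMem : ∀ c, ∀ z ∈ f c, z ∉ L → u ∈ f c := fun c z hz hzL =>
      let ⟨_, hvc, hvL⟩ := hL c
      (h.mem_of_preconnected (hf.connected c).preconnected hvc hvL hz hzL).1
    have not_both : u ∈ f a → u ∉ f b := fun hua hub => hab.ne (hf.eq_of_mem hua hub)
    by_cases hxL : x ∈ L <;> by_cases hyL : y ∈ L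
    · exact ⟨x, ⟨hx, hxL⟩, y, ⟨hy, hyL⟩, hxy⟩
    · have hxu := (h.eq_of_adj x y hxy hxL hyL).1
      exact absurd (left_mem_of_notMem b y hy hyL) (not_both (hxu ▸ hx))
    · have hyu := (h.eq_of_adj y x hxy.symm hyL hxL).1
      exact absurd (hyu ▸ hy) (not_both (left_mem_of_notMem a x hx hxL))
    · exact absurd (left_mem_of_notMem b y hy hyL) (not_both (left_mem_of_notMem a x hx hxL))

end IsBridgeCut

/-- `K` is `2`-connected: no two vertices exhaust it, and it remains connected when a vertex is
removed. The empty graph is not excluded. -/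
structure IsTwoConnected (K : SimpleGraph α) : Prop where
  exists_third : ∀ b c : α, ∃ d, d ≠ b ∧ d ≠ c
  preconnected_compl : ∀ a, (K.induce {a}ᶜ).Preconnected

namespace IsBridgeCut

lemma exists_ne_left_mem (h : IsBridgeCut J L u w) (hf : IsMinorModel K J f) {a b c : α}
    (hK : (K.induce {a}ᶜ).Preconnected) (hb : b ≠ a) (hc : c ≠ a) (hbL : Disjoint (f b) L)
    (hcL : f c ⊆ L) : ∃ a', a' ≠ a ∧ u ∈ f a' := by
  obtain ⟨p⟩ := hK ⟨c, hc⟩ ⟨b, hb⟩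
  have hb_notSubset : ¬ f b ⊆ L := fun hsub =>
    (hf.nonempty b).ne_empty (Set.eq_empty_of_subset_empty (hbL le_rfl hsub))
  obtain ⟨d, -, hfst, hsnd⟩ := p.exists_boundary_dart {x | f x.1 ⊆ L} hcL hb_notSubset
  obtain ⟨x, hx, y, hy, hxy⟩ := hf.exists_adj _ _ d.adj
  by_cases hyL : y ∈ L
  · obtain ⟨z, hz, hzL⟩ := Set.not_subset.1 hsnd
    exact ⟨d.snd, d.snd.2,
      (h.mem_of_preconnected (hf.connected d.snd).preconnected hy hyL hz hzL).1⟩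
  · exact ⟨d.fst, d.fst.2, (h.eq_of_adj x y hxy (hfst hx) hyL).1 ▸ hx⟩

lemma left_mem_of_subset (h : IsBridgeCut J L u w) (hf : IsMinorModel K J f)
    (hK : IsTwoConnected K) {b c : α} (hbL : Disjoint (f b) L) (hcL : f c ⊆ L) : u ∈ f c := by
  have exists_mem_avoiding : ∀ a, b ≠ a → c ≠ a → ∃ a', a' ≠ a ∧ u ∈ f a' := fun a hb hc =>
    h.exists_ne_left_mem hf (hK.preconnected_compl a) hb hc hbL hcL
  obtain ⟨d, hdb, hdc⟩ := hK.exists_third b c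
  obtain ⟨a, -, ha⟩ := exists_mem_avoiding d hdb.symm hdc.symm
  have hba : b ≠ a := by
    rintro rfl
    exact Set.disjoint_left.1 hbL ha h.left_mem
  by_contra huc
  have hca : c ≠ a := by
    rintro rfl
    exact huc ha
  obtain ⟨a', ha'a, ha'⟩ := exists_mem_avoiding a hba hca
  exact ha'a (hf.eq_of_mem ha' ha)

lemma not_disjoint_of_subset (h : IsBridgeCut J L u w) (hf : IsMinorModel K J f)
    (hK : IsTwoConnected K) {b c : α} (hcL : f c ⊆ L) : ¬ Disjoint (f b) L := by
  intro hbL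
  have left_mem : ∀ c, f c ⊆ L → u ∈ f c := fun c => h.left_mem_of_subset hf hK hbL
  have right_mem : ∀ b, f b ⊆ Lᶜ → w ∈ f b := fun b =>
    h.compl.left_mem_of_subset hf hK (Set.disjoint_compl_right_iff_subset.2 hcL)
  have hu := left_mem c hcL
  obtain ⟨d, hdb, hdc⟩ := hK.exists_third b c
  by_cases hdL : f d ⊆ L
  · exact hdc (hf.eq_of_mem (left_mem d hdL) hu)
  · obtain ⟨y, hy, hyL⟩ := Set.not_subset.1 hdL
    by_cases hdL' : f d ⊆ Lᶜ
    · have hw := right_mem b (Set.subset_compl_iff_disjoint_right.2 hbL)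
      exact hdb (hf.eq_of_mem (right_mem d hdL') hw)
    · obtain ⟨x, hx, hxL⟩ := Set.not_subset.1 hdL'
      exact hdc (hf.eq_of_mem (h.mem_of_preconnected (hf.connected d).preconnected hx
        (Set.notMem_compl_iff.1 hxL) hy hyL).1 hu)

lemma exists_isMinorModel_side (h : IsBridgeCut J L u w) (hf : IsMinorModel K J f)
    (hK : IsTwoConnected K) :
    ∃ f', IsMinorModel K J f' ∧ ((∀ a, f' a ⊆ L) ∨ ∀ a, f' a ⊆ Lᶜ) := by
  by_cases hL : ∀ a, (f a ∩ L).Nonempty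
  · exact ⟨_, h.isMinorModel_inter hf hL, .inl fun a => Set.inter_subset_right⟩
  · push Not at hL
    obtain ⟨b, hb⟩ := hL
    have hLc : ∀ a, (f a ∩ Lᶜ).Nonempty := fun a => Set.inter_compl_nonempty_iff.2 fun ha =>
      h.not_disjoint_of_subset hf hK ha (Set.disjoint_iff_inter_eq_empty.2 hb)
    exact ⟨_, h.compl.isMinorModel_inter hf hLc, .inr fun a => Set.inter_subset_right⟩

end IsBridgeCut

lemma isTwoConnected_completeGraph : IsTwoConnected (completeGraph (Fin 5)) where
  exists_third := by decide
  preconnected_compl a := by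
    rw [induce_top]
    exact preconnected_top

lemma isTwoConnected_completeBipartiteGraph :
    IsTwoConnected (completeBipartiteGraph (Fin 3) (Fin 3)) where
  exists_third := by decide
  preconnected_compl a := by
    obtain ⟨i, hi⟩ : ∃ i : Fin 3, Sum.inl i ≠ a := by decide +revert
    obtain ⟨j, hj⟩ : ∃ j : Fin 3, Sum.inr j ≠ a := by decide +revert
    have reachable : ∀ (x y : Fin 3) (hx : Sum.inl x ≠ a) (hy : Sum.inr y ≠ a),
        ((completeBipartiteGraph (Fin 3) (Fin 3)).induce {a}ᶜ).Reachable
          ⟨Sum.inl x, hx⟩ ⟨Sum.inr y, hy⟩ := fun x y hx hy =>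
      Adj.reachable (by simp)
    rintro ⟨x | x, hx⟩ ⟨y | y, hy⟩
    · exact (reachable x j hx hj).trans (reachable y j hy hj).symm
    · exact reachable x y hx hy
    · exact (reachable y x hy hx).symm
    · exact (reachable i x hi hx).symm.trans (reachable i y hi hy)

end Bridge

section BridgeSum

variable {V W α : Type*} {G : SimpleGraph V} {Q : SimpleGraph W} {K : SimpleGraph α} {u : V} {w : W}

lemma IsMinor.of_iso (h : IsMinor K Q) (φ : G ≃g Q) : IsMinor K G := by
  obtain ⟨f, hf⟩ := isMinor_iff_exists_isMinorModel.1 h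
  refine isMinor_iff_exists_isMinorModel.2 ⟨_, hf.comap φ.toEmbedding fun a => ?_⟩
  exact (Set.subset_univ _).trans_eq φ.surjective.range_eq.symm

lemma IsPlanar.of_iso (hG : IsPlanar G) (φ : G ≃g Q) : IsPlanar Q :=
  ⟨fun h => hG.1 (h.of_iso φ), fun h => hG.2 (h.of_iso φ)⟩

lemma vertexDegree_iso (φ : G ≃g Q) (v : V) : vertexDegree Q (φ v) = vertexDegree G v :=
  (Nat.card_congr (φ.mapNeighborSet v)).symm

/-- The disjoint union of `G` and `Q` with the additional edge `{u, w}`. -/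
def bridgeSum (G : SimpleGraph V) (Q : SimpleGraph W) (u : V) (w : W) : SimpleGraph (V ⊕ W) :=
  (G ⊕g Q) ⊔ edge (Sum.inl u) (Sum.inr w)

lemma bridgeSum_adj_inl_inl {a b : V} :
    (bridgeSum G Q u w).Adj (Sum.inl a) (Sum.inl b) ↔ G.Adj a b := by
  simp [bridgeSum, edge_adj]

lemma bridgeSum_adj_inr_inr {a b : W} :
    (bridgeSum G Q u w).Adj (Sum.inr a) (Sum.inr b) ↔ Q.Adj a b := by
  simp [bridgeSum, edge_adj]

lemma bridgeSum_adj_inl_inr {a : V} {b : W} :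
    (bridgeSum G Q u w).Adj (Sum.inl a) (Sum.inr b) ↔ a = u ∧ b = w := by
  simp [bridgeSum, edge_adj]

variable (G Q u w)

/-- The inclusion of the first summand into `bridgeSum G Q u w`. -/
def bridgeSumInl : G ↪g bridgeSum G Q u w :=
  ⟨Function.Embedding.inl, bridgeSum_adj_inl_inl⟩

/-- The inclusion of the second summand into `bridgeSum G Q u w`. -/
def bridgeSumInr : Q ↪g bridgeSum G Q u w :=
  ⟨Function.Embedding.inr, bridgeSum_adj_inr_inr⟩

/-- Exchanging the two summands of `bridgeSum G Q u w`. -/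
def bridgeSumComm : bridgeSum G Q u w ≃g bridgeSum Q G w u where
  toEquiv := Equiv.sumComm V W
  map_rel_iff' := by
    rintro (a | a) (b | b) <;> simp [bridgeSum, edge_adj, and_comm]

lemma isBridgeCut_bridgeSum :
    IsBridgeCut (bridgeSum G Q u w) (Set.range Sum.inl) (Sum.inl u) (Sum.inr w) where
  left_mem := ⟨u, rfl⟩
  right_notMem := by simp
  eq_of_adj := by
    rintro _ (b | b) hab ⟨a, rfl⟩ hb
    · exact absurd ⟨b, rfl⟩ hb
    · simpa using bridgeSum_adj_inl_inr.1 hab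

variable {G Q}

lemma not_isMinor_bridgeSum (hK : IsTwoConnected K) (hG : ¬ IsMinor K G) (hQ : ¬ IsMinor K Q) :
    ¬ IsMinor K (bridgeSum G Q u w) := by
  simp only [isMinor_iff_exists_isMinorModel] at hG hQ ⊢
  rintro ⟨f, hf⟩
  obtain ⟨f', hf', hleft | hright⟩ := (isBridgeCut_bridgeSum G Q u w).exists_isMinorModel_side hf hK
  · exact hG ⟨_, hf'.comap (bridgeSumInl G Q u w) hleft⟩
  · rw [Set.isCompl_range_inl_range_inr.compl_eq] at hright
    exact hQ ⟨_, hf'.comap (bridgeSumInr G Q u w) hright⟩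

lemma IsPlanar.bridgeSum (hG : IsPlanar G) (hQ : IsPlanar Q) : IsPlanar (bridgeSum G Q u w) :=
  ⟨not_isMinor_bridgeSum u w isTwoConnected_completeGraph hG.1 hQ.1,
    not_isMinor_bridgeSum u w isTwoConnected_completeBipartiteGraph hG.2 hQ.2⟩

variable (G Q)

lemma vertexDegree_bridgeSum_inl_self [Finite V] :
    vertexDegree (bridgeSum G Q u w) (Sum.inl u) = vertexDegree G u + 1 := by
  have neighborSet_eq : (bridgeSum G Q u w).neighborSet (Sum.inl u) =
      insert (Sum.inr w) (Sum.inl '' G.neighborSet u) := by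
    ext (a | a) <;> simp [bridgeSum_adj_inl_inl, bridgeSum_adj_inl_inr]
  rw [vertexDegree, neighborSet_eq, Set.ncard_insert_of_notMem (by simp) (Set.toFinite _),
    Set.ncard_image_of_injective _ Sum.inl_injective, vertexDegree]

lemma vertexDegree_bridgeSum_inl_of_ne {v : V} (hv : v ≠ u) :
    vertexDegree (bridgeSum G Q u w) (Sum.inl v) = vertexDegree G v := by
  have neighborSet_eq :
      (bridgeSum G Q u w).neighborSet (Sum.inl v) = Sum.inl '' G.neighborSet v := by
    ext (a | a) <;> simp [bridgeSum_adj_inl_inl, bridgeSum_adj_inl_inr, hv]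
  rw [vertexDegree, neighborSet_eq, Set.ncard_image_of_injective _ Sum.inl_injective, vertexDegree]

variable {Q w}

lemma IsGadget.vertexDegree_bridgeSum_inr [Finite W] {D : ℕ} (hQ : IsGadget D Q w) (v : W) :
    vertexDegree (bridgeSum G Q u w) (Sum.inr v) = D := by
  rw [← vertexDegree_iso (bridgeSumComm G Q u w)]
  change vertexDegree (bridgeSum Q G w u) (Sum.inl v) = D
  by_cases hv : v = w
  · rw [hv, vertexDegree_bridgeSum_inl_self, hQ.vertexDegree_root]
  · rw [vertexDegree_bridgeSum_inl_of_ne _ _ _ _ hv, hQ.vertexDegree_of_ne v hv]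

variable {G u}

lemma IsGadget.vertexDegree_bridgeSum_le [Finite V] [Finite W] {D : ℕ} (hQ : IsGadget D Q w)
    (hG : ∀ v, vertexDegree G v ≤ D) (hu : vertexDegree G u < D) (x : V ⊕ W) :
    vertexDegree (bridgeSum G Q u w) x ≤ D := by
  obtain v | v := x
  · by_cases hv : v = u
    · rw [hv, vertexDegree_bridgeSum_inl_self]
      exact hu
    · exact (vertexDegree_bridgeSum_inl_of_ne G Q u w hv).trans_le (hG v)
  · exact (hQ.vertexDegree_bridgeSum_inr G u v).le

lemma IsGadget.sum_bridgeSum_lt [Fintype V] [Fintype W] {D : ℕ} (hQ : IsGadget D Q w)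
    (hu : vertexDegree G u < D) :
    ∑ x, (D - vertexDegree (bridgeSum G Q u w) x) < ∑ v, (D - vertexDegree G v) := by
  simp only [Fintype.sum_sum_type, hQ.vertexDegree_bridgeSum_inr, Nat.sub_self,
    Finset.sum_const_zero, add_zero]
  have sub_self_lt : D - vertexDegree (bridgeSum G Q u w) (Sum.inl u) < D - vertexDegree G u := by
    rw [vertexDegree_bridgeSum_inl_self]
    omega
  refine Finset.sum_lt_sum (fun v _ => ?_) ⟨u, Finset.mem_univ u, sub_self_lt⟩
  by_cases hv : v = u
  · exact hv ▸ sub_self_lt.le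
  · rw [vertexDegree_bridgeSum_inl_of_ne _ _ _ _ hv]

lemma IsGadget.exists_regular {V : Type u} {W : Type} [Finite V] [Finite W] {G : SimpleGraph V}
    {Q : SimpleGraph W} {w : W} {D : ℕ} (hQ : IsGadget D Q w) (hG : IsPlanar G)
    (hdeg : ∀ v, vertexDegree G v ≤ D) :
    ∃ (V' : Type u) (_ : Finite V') (G' : SimpleGraph V'),
      IsPlanar G' ∧ (∀ v, vertexDegree G' v = D) ∧ G ⊑ G' := by
  have := Fintype.ofFinite W
  cases nonempty_fintype V
  induction hn : ∑ v, (D - vertexDegree G v) using Nat.strong_induction_on generalizing V with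
  | _ n ih =>
    by_cases hreg : ∀ v, vertexDegree G v = D
    · exact ⟨V, inferInstance, G, hG, hreg, .rfl⟩
    · push Not at hreg
      obtain ⟨u, hu⟩ := hreg
      have hu_lt := (hdeg u).lt_of_ne hu
      obtain ⟨V', _, G', hG', hreg', hle⟩ := ih _ (hn ▸ hQ.sum_bridgeSum_lt hu_lt)
        (hG.bridgeSum u w hQ.isPlanar) (hQ.vertexDegree_bridgeSum_le hdeg hu_lt) inferInstance rfl
      exact ⟨V', inferInstance, G', hG', hreg', (bridgeSumInl G Q u w).isContained.trans hle⟩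

end BridgeSum

theorem regular_planar_extension (D : ℕ) (hD : D = 3 ∨ D = 5) {V : Type*} [Fintype V]
    (H : SimpleGraph V) (hplanar : IsPlanar H) (hdeg : ∀ v, vertexDegree H v ≤ D) :
    ∃ (N : ℕ) (G : SimpleGraph (Fin N)),
      IsPlanar G ∧ (∀ v, vertexDegree G v = D) ∧
        ∃ f : V → Fin N, Function.Injective f ∧ ∀ a b, H.Adj a b → G.Adj (f a) (f b) := by
  obtain ⟨V', _, G, hG, hreg, ⟨φ⟩⟩ : ∃ (V' : Type _) (_ : Finite V') (G : SimpleGraph V'),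
      IsPlanar G ∧ (∀ v, vertexDegree G v = D) ∧ H ⊑ G := by
    rcases hD with rfl | rfl
    · exact isGadget_cubic.exists_regular hplanar hdeg
    · exact isGadget_quintic.exists_regular hplanar hdeg
  have := Fintype.ofFinite V'
  let e := G.overFinIso rfl
  refine ⟨_, G.overFin rfl, hG.of_iso e, fun v => ?_, e ∘ φ, e.injective.comp φ.injective,
    fun a b hab => e.map_adj_iff.2 (φ.toHom.map_adj hab)⟩
  rw [← e.apply_symm_apply v, vertexDegree_iso, hreg]
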